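/- Let ρ ∈ (0,1], T > 0, τ > N/(2m), and suppose Σ_n (A(n)+1)^{2(τ+1)} |Ψ_n|² ≤ C_Ψ < ∞. Then the series f¹(x) = Σ_{n∈ℤ^N} Ψ_n / (T^ρ E_{ρ,ρ+1}(−A(n)T^ρ)) e^{inx} converges absolutely and uniformly on 𝕋^N, and ‖f¹‖²_{C(𝕋^N)} ≤ C · Σ_n (A(n)+1)^{2(τ+1)} |Ψ_n|². -/

import Mathlib

open Filter

/-- The two-parameter Mittag-Leffler function `E_{ρ,μ}(z) = Σ_{k=0}^∞ z^k / Γ(ρk+μ)`. -/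
noncomputable def mittagLeffler (ρ μ z : ℝ) : ℝ :=
  ∑' k : ℕ, z ^ k / Real.Gamma (ρ * k + μ)

/-- The character `x ↦ e^{i n·x}` on the `N`-dimensional torus, `n ∈ ℤ^N`. -/
noncomputable def charFun {N : ℕ} (n : Fin N → ℤ) (x : Fin N → ℝ) : ℂ :=
  Complex.exp (Complex.I * ∑ i, (n i : ℂ) * (x i : ℂ))

/-!
The key estimate is `1 / (Γ(ρ+1) + x) ≤ E_{ρ,ρ+1}(-x)` for `0 < ρ ≤ 1` and `0 ≤ x`. The function
`t^(μ-1) E_{ρ,μ}(-x t^ρ)` solves a Volterra equation with kernel `(t - s)^(ρ-1)`, and comparing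
kernels shows that its solution cannot have a first zero when `ρ ≤ μ`. Positivity of `E_{ρ,ρ}`
makes `t^ρ E_{ρ,ρ+1}(-x t^ρ) = ∫₀ᵗ s^(ρ-1) E_{ρ,ρ}(-x s^ρ) ds` nondecreasing in `t`, so
`E_{ρ,1}(-x t^ρ) = 1 - x t^ρ E_{ρ,ρ+1}(-x t^ρ)` is at least `E_{ρ,1}(-x)` on `(0, 1]`. As
`E_{ρ,ρ+1}(-x)` is the fractional integral of `E_{ρ,1}(-x t^ρ)` of order `ρ` over `(0, 1)`, it is at
least `E_{ρ,1}(-x) / Γ(ρ+1) = (1 - x E_{ρ,ρ+1}(-x)) / Γ(ρ+1)`, which is the estimate.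

The coefficients of `f¹` are therefore `O((A(n)+1) |Ψ_n|)`, and Cauchy–Schwarz bounds their
`ℓ¹`-norm by the weighted `ℓ²`-norm of `Ψ` times `(Σ (A(n)+1)^(-2τ))^(1/2)`; by ellipticity the
latter is a lattice sum of `|n|^(-2mτ)`, convergent because `2mτ > N`.
-/

section Volterra

open Set MeasureTheory Topology

variable {ρ g : ℝ} {φ w : ℝ → ℝ}

lemma intervalIntegrable_sub_rpow (hρ : 0 < ρ) (t a b : ℝ) :
    IntervalIntegrable (fun s => (t - s) ^ (ρ - 1)) volume a b := by
  simpa only [sub_sub_cancel] using (intervalIntegral.intervalIntegrable_rpow' (a := t - a)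
    (b := t - b) (by linarith : -1 < ρ - 1)).comp_sub_left t

lemma integral_sub_rpow (hρ : 0 < ρ) (a t : ℝ) :
    ∫ s in a..t, (t - s) ^ (ρ - 1) = (t - a) ^ ρ / ρ := by
  rw [intervalIntegral.integral_comp_sub_left (fun x => x ^ (ρ - 1)) t,
    integral_rpow (Or.inl (by linarith))]
  simp [Real.zero_rpow hρ.ne']

lemma sub_rpow_le_div_rpow_mul {r s t t₀ : ℝ} (hr : r ≤ 0) (hs : 0 ≤ s) (hst : s < t)
    (ht : t ≤ t₀) : (t₀ - s) ^ r ≤ (t₀ / t) ^ r * (t - s) ^ r := by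
  have ht_pos : 0 < t := hs.trans_lt hst
  have ht₀_pos : 0 < t₀ := ht_pos.trans_le ht
  rw [← Real.mul_rpow (by positivity) (by linarith)]
  refine Real.rpow_le_rpow_of_nonpos (mul_pos (by positivity) (by linarith)) ?_ hr
  have : s ≤ t₀ / t * s := le_mul_of_one_le_left hs ((one_le_div ht_pos).2 ht)
  linarith [mul_sub (t₀ / t) t s, div_mul_cancel₀ t₀ ht_pos.ne']

lemma div_rpow_mul_le_of_monotoneOn (hφ : MonotoneOn (fun t => t ^ (1 - ρ) * φ t) (Ioi 0))
    {t t₀ : ℝ} (ht : 0 < t) (htt₀ : t ≤ t₀) : (t₀ / t) ^ (ρ - 1) * φ t ≤ φ t₀ := by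
  have ht₀ : 0 < t₀ := ht.trans_le htt₀
  calc (t₀ / t) ^ (ρ - 1) * φ t = t₀ ^ (ρ - 1) * (t ^ (1 - ρ) * φ t) := by
        rw [Real.div_rpow ht₀.le ht.le, ← neg_sub ρ 1, Real.rpow_neg ht.le]
        ring
    _ ≤ t₀ ^ (ρ - 1) * (t₀ ^ (1 - ρ) * φ t₀) := by
          exact mul_le_mul_of_nonneg_left (hφ ht ht₀ htt₀) (Real.rpow_nonneg ht₀.le _)
    _ = φ t₀ := by rw [← mul_assoc, ← Real.rpow_add ht₀]; simp

-- For `s < t` the kernel at `t₀` is at most `(t₀ / t) ^ (ρ - 1)` times the kernel at `t`, the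
-- factor by which `φ` may shrink from `t` to `t₀`; only the part of the integral over `(t, t₀)` can
-- lower `w` further.
lemma volterra_mul_le (hρ : 0 < ρ) (hρ1 : ρ ≤ 1) (hg : 0 ≤ g)
    (hφ : MonotoneOn (fun t => t ^ (1 - ρ) * φ t) (Ioi 0))
    (hint : ∀ t, 0 < t → IntervalIntegrable (fun s => (t - s) ^ (ρ - 1) * w s) volume 0 t)
    (hw : ∀ t, 0 < t → w t = φ t - g * ∫ s in (0 : ℝ)..t, (t - s) ^ (ρ - 1) * w s)
    {t t₀ : ℝ} (ht : 0 < t) (htt₀ : t ≤ t₀) (hnonneg : ∀ s ∈ Ioo 0 t, 0 ≤ w s)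
    (hmax : ∀ s ∈ Ioo t t₀, w s ≤ w t) :
    ((t₀ / t) ^ (ρ - 1) - g * ((t₀ - t) ^ ρ / ρ)) * w t ≤ w t₀ := by
  have ht₀ : 0 < t₀ := ht.trans_le htt₀
  have hint_left : IntervalIntegrable (fun s => (t₀ - s) ^ (ρ - 1) * w s) volume 0 t :=
    (hint t₀ ht₀).mono_set (uIcc_subset_uIcc_left (by simp [uIcc_of_le ht₀.le, ht.le, htt₀]))
  have hint_right : IntervalIntegrable (fun s => (t₀ - s) ^ (ρ - 1) * w s) volume t t₀ :=
    (hint t₀ ht₀).mono_set (uIcc_subset_uIcc_right (by simp [uIcc_of_le ht₀.le, ht.le, htt₀]))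
  have h_left : ∫ s in (0 : ℝ)..t, (t₀ - s) ^ (ρ - 1) * w s ≤
      (t₀ / t) ^ (ρ - 1) * ∫ s in (0 : ℝ)..t, (t - s) ^ (ρ - 1) * w s := by
    rw [← intervalIntegral.integral_const_mul]
    refine intervalIntegral.integral_mono_on_of_le_Ioo ht.le hint_left
      ((hint t ht).const_mul _) fun s hs => ?_
    rw [← mul_assoc]
    exact mul_le_mul_of_nonneg_right
      (sub_rpow_le_div_rpow_mul (by linarith) hs.1.le hs.2 htt₀) (hnonneg s hs)
  have h_right : ∫ s in t..t₀, (t₀ - s) ^ (ρ - 1) * w s ≤ (t₀ - t) ^ ρ / ρ * w t := by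
    rw [← integral_sub_rpow hρ, ← intervalIntegral.integral_mul_const]
    exact intervalIntegral.integral_mono_on_of_le_Ioo htt₀ hint_right
      ((intervalIntegrable_sub_rpow hρ t₀ t t₀).mul_const _) fun s hs =>
        mul_le_mul_of_nonneg_left (hmax s hs) (Real.rpow_nonneg (by linarith [hs.2]) _)
  calc ((t₀ / t) ^ (ρ - 1) - g * ((t₀ - t) ^ ρ / ρ)) * w t
      = (t₀ / t) ^ (ρ - 1) * φ t -
          g * ((t₀ / t) ^ (ρ - 1) * (∫ s in (0 : ℝ)..t, (t - s) ^ (ρ - 1) * w s) +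
            (t₀ - t) ^ ρ / ρ * w t) := by
        linear_combination (t₀ / t) ^ (ρ - 1) * hw t ht
    _ ≤ φ t₀ - g * ((∫ s in (0 : ℝ)..t, (t₀ - s) ^ (ρ - 1) * w s) +
          ∫ s in t..t₀, (t₀ - s) ^ (ρ - 1) * w s) := by
        gcongr
        exact div_rpow_mul_le_of_monotoneOn hφ ht htt₀
    _ = w t₀ := by
        rw [intervalIntegral.integral_add_adjacent_intervals hint_left hint_right, ← hw t₀ ht₀]

lemma exists_first_nonpos (hcont : ContinuousOn w (Ioi 0)) (hzero : ∀ᶠ t in 𝓝[>] 0, 0 < w t)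
    {t₁ : ℝ} (ht₁ : 0 < t₁) (hw₁ : w t₁ ≤ 0) :
    ∃ t₀, 0 < t₀ ∧ w t₀ ≤ 0 ∧ ∀ s ∈ Ioo 0 t₀, 0 < w s := by
  obtain ⟨δ, hδ, hδ_pos⟩ := mem_nhdsGT_iff_exists_Ioo_subset.1 hzero
  have hδt₁ : δ ≤ t₁ := by
    by_contra! h
    exact (hδ_pos ⟨ht₁, h⟩).not_ge hw₁
  have hcompact : IsCompact (Icc δ t₁ ∩ w ⁻¹' Iic 0) :=
    isCompact_Icc.of_isClosed_subset ((hcont.mono fun t ht => hδ.trans_le ht.1)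
      |>.preimage_isClosed_of_isClosed isClosed_Icc isClosed_Iic) inter_subset_left
  obtain ⟨t₀, ⟨ht₀, hw₀⟩, hleast⟩ := hcompact.exists_isLeast ⟨t₁, ⟨hδt₁, le_rfl⟩, hw₁⟩
  refine ⟨t₀, hδ.trans_le ht₀.1, hw₀, fun s hs => ?_⟩
  by_contra! hws
  have hδs : δ ≤ s := by
    by_contra! h
    exact (hδ_pos ⟨hs.1, h⟩).not_ge hws
  exact hs.2.not_ge (hleast ⟨⟨hδs, hs.2.le.trans ht₀.2⟩, hws⟩)

lemma volterra_pos (hρ : 0 < ρ) (hρ1 : ρ ≤ 1) (hg : 0 ≤ g)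
    (hφ : MonotoneOn (fun t => t ^ (1 - ρ) * φ t) (Ioi 0))
    (hcont : ContinuousOn w (Ioi 0)) (hzero : ∀ᶠ t in 𝓝[>] 0, 0 < w t)
    (hint : ∀ t, 0 < t → IntervalIntegrable (fun s => (t - s) ^ (ρ - 1) * w s) volume 0 t)
    (hw : ∀ t, 0 < t → w t = φ t - g * ∫ s in (0 : ℝ)..t, (t - s) ^ (ρ - 1) * w s)
    {t : ℝ} (ht : 0 < t) : 0 < w t := by
  by_contra! hwt
  obtain ⟨t₀, ht₀, hw₀, hpos⟩ := exists_first_nonpos hcont hzero ht hwt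
  have hfactor : ∀ᶠ t in 𝓝 t₀, 0 < (t₀ / t) ^ (ρ - 1) - g * ((t₀ - t) ^ ρ / ρ) := by
    have hcontAt : ContinuousAt (fun t => (t₀ / t) ^ (ρ - 1) - g * ((t₀ - t) ^ ρ / ρ)) t₀ := by
      have := ht₀.ne'
      fun_prop (disch := simp [this, hρ.le])
    refine hcontAt.eventually_const_lt ?_
    simp [div_self ht₀.ne', Real.zero_rpow hρ.ne']
  obtain ⟨a, ha, hfactor_pos⟩ := exists_Ioc_subset_of_mem_nhds hfactor ⟨0, ht₀⟩
  obtain ⟨b, hb, hbt₀⟩ := exists_between (max_lt ha ht₀)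
  have hb_pos : 0 < b := (le_max_right a 0).trans_lt hb
  obtain ⟨t, ht, htmax⟩ := isCompact_Icc.exists_isMaxOn (nonempty_Icc.2 hbt₀.le)
    (hcont.mono fun s (hs : s ∈ Icc b t₀) => hb_pos.trans_le hs.1)
  have hwt_pos : 0 < w t := (hpos b ⟨hb_pos, hbt₀⟩).trans_le (htmax ⟨le_rfl, hbt₀.le⟩)
  have hstep := volterra_mul_le hρ hρ1 hg hφ hint hw (hb_pos.trans_le ht.1) ht.2
    (fun s hs => (hpos s ⟨hs.1, hs.2.trans_le ht.2⟩).le)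
    (fun s hs => htmax ⟨ht.1.trans hs.1.le, hs.2.le⟩)
  have hfactor_t := hfactor_pos ⟨(le_max_left a 0).trans_lt (hb.trans_le ht.1), ht.2⟩
  exact (mul_pos hfactor_t hwt_pos).not_ge (hstep.trans hw₀)

end Volterra

section MittagLeffler

open Set MeasureTheory

lemma rpow_mul_exp_neg_le_Gamma_add_one {x M : ℝ} (hx : 0 ≤ x) (hM : 0 ≤ M) :
    M ^ x * Real.exp (-M) ≤ Real.Gamma (x + 1) := by
  have hconv : IntegrableOn (fun t => Real.exp (-t) * t ^ x) (Ioi 0) := by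
    simpa only [add_sub_cancel_right] using
      Real.GammaIntegral_convergent (s := x + 1) (by positivity)
  calc M ^ x * Real.exp (-M) = ∫ t in Ioi M, Real.exp (-t) * M ^ x := by
        rw [integral_mul_const, integral_exp_neg_Ioi, mul_comm]
    _ ≤ ∫ t in Ioi M, Real.exp (-t) * t ^ x := by
        refine setIntegral_mono_on ((integrableOn_exp_neg_Ioi M).mul_const _)
          (hconv.mono_set (Ioi_subset_Ioi hM)) measurableSet_Ioi fun t ht => ?_
        gcongr
        exact ht.le
    _ ≤ ∫ t in Ioi 0, Real.exp (-t) * t ^ x :=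
        setIntegral_mono_set hconv
          (ae_restrict_of_forall_mem measurableSet_Ioi fun t (ht : 0 < t) => by positivity)
          (Ioi_subset_Ioi hM).eventuallyLE
    _ = Real.Gamma (x + 1) := by
        rw [Real.Gamma_eq_integral (by positivity), add_sub_cancel_right]

variable {ρ μ : ℝ}

lemma summable_pow_div_Gamma (hρ : 0 < ρ) (μ z : ℝ) :
    Summable fun k : ℕ => z ^ k / Real.Gamma (ρ * k + μ) := by
  -- With `M ^ ρ > 2 |z|`, the bound `M ^ x e ^ (-M) ≤ Γ(x + 1)` gives geometric decay.
  set M : ℝ := (2 * |z| + 1) ^ ρ⁻¹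
  have hM_pos : 0 < M := by positivity
  have hMρ : M ^ ρ = 2 * |z| + 1 := Real.rpow_inv_rpow (by positivity) hρ.ne'
  have hgeom : Summable fun k : ℕ => Real.exp M * M ^ (1 - μ) * (1 / 2 : ℝ) ^ k :=
    summable_geometric_two.mul_left _
  refine .of_norm_bounded_eventually_nat hgeom ?_
  have hlarge : ∀ᶠ k : ℕ in atTop, 1 - μ ≤ ρ * k :=
    (tendsto_natCast_atTop_atTop.const_mul_atTop hρ).eventually_ge_atTop _
  filter_upwards [hlarge] with k hk
  have hGamma : M ^ (ρ * k + μ - 1) * Real.exp (-M) ≤ Real.Gamma (ρ * k + μ) := by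
    simpa only [sub_add_cancel] using
      rpow_mul_exp_neg_le_Gamma_add_one (x := ρ * k + μ - 1) (by linarith) hM_pos.le
  have hM_pow : M ^ (ρ * k + μ - 1) = (2 * |z| + 1) ^ k * (M ^ (1 - μ))⁻¹ := by
    rw [← hMρ, ← Real.rpow_mul_natCast hM_pos.le, ← Real.rpow_neg hM_pos.le,
      ← Real.rpow_add hM_pos]
    ring_nf
  have hGamma_pos : 0 < Real.Gamma (ρ * k + μ) := Real.Gamma_pos_of_pos (by linarith)
  rw [norm_div, norm_pow, Real.norm_eq_abs, Real.norm_of_nonneg hGamma_pos.le,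
    div_le_iff₀ hGamma_pos]
  calc |z| ^ k ≤ (1 / 2 * (2 * |z| + 1)) ^ k := by gcongr; linarith
    _ = Real.exp M * M ^ (1 - μ) * (1 / 2) ^ k * (M ^ (ρ * k + μ - 1) * Real.exp (-M)) := by
        rw [hM_pow, Real.exp_neg, mul_pow]
        field_simp
    _ ≤ Real.exp M * M ^ (1 - μ) * (1 / 2) ^ k * Real.Gamma (ρ * k + μ) := by gcongr

lemma hasSum_mittagLeffler (hρ : 0 < ρ) (μ z : ℝ) :
    HasSum (fun k : ℕ => z ^ k / Real.Gamma (ρ * k + μ)) (mittagLeffler ρ μ z) :=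
  (summable_pow_div_Gamma hρ μ z).hasSum

lemma continuous_mittagLeffler (hρ : 0 < ρ) (μ : ℝ) : Continuous (mittagLeffler ρ μ) := by
  have hball : ∀ R : ℝ, ContinuousOn (mittagLeffler ρ μ) (Metric.ball 0 R) := fun R =>
    continuousOn_tsum (fun k => by fun_prop) (summable_pow_div_Gamma hρ μ R).norm
      fun k x hx => by
        simp only [norm_div, norm_pow]
        gcongr
        exact (mem_ball_zero_iff.1 hx).le.trans (le_abs_self R)
  exact continuous_iff_continuousAt.2 fun x =>
    (hball (‖x‖ + 1)).continuousAt (Metric.isOpen_ball.mem_nhds (by simp))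

lemma mittagLeffler_eq_add_mul (hρ : 0 < ρ) (μ z : ℝ) :
    mittagLeffler ρ μ z = 1 / Real.Gamma μ + z * mittagLeffler ρ (μ + ρ) z := by
  rw [mittagLeffler, (summable_pow_div_Gamma hρ μ z).tsum_eq_zero_add, mittagLeffler,
    ← tsum_mul_left]
  congr 1
  · simp
  · refine tsum_congr fun k => ?_
    rw [show ρ * ((k + 1 : ℕ) : ℝ) + μ = ρ * k + (μ + ρ) by push_cast; ring]
    ring

variable {α β t : ℝ}

lemma integral_sub_rpow_mul_rpow (hα : 0 < α) (hβ : 0 < β) (ht : 0 < t) :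
    ∫ s in (0 : ℝ)..t, (t - s) ^ (α - 1) * s ^ (β - 1) =
      t ^ (β + α - 1) * (Real.Gamma β * Real.Gamma α / Real.Gamma (β + α)) := by
  apply Complex.ofReal_injective
  have hbeta := Complex.betaIntegral_scaled β α ht
  rw [Complex.betaIntegral_eq_Gamma_mul_div _ _ (by simpa) (by simpa)] at hbeta
  rw [← intervalIntegral.integral_ofReal]
  push_cast [Complex.ofReal_cpow ht.le, ← Complex.Gamma_ofReal]
  rw [← hbeta]
  refine intervalIntegral.integral_congr fun s hs => ?_
  rw [uIcc_of_le ht.le] at hs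
  rw [Complex.ofReal_cpow hs.1, Complex.ofReal_cpow (sub_nonneg.2 hs.2), mul_comm]
  push_cast
  rfl

lemma intervalIntegrable_sub_rpow_mul_rpow (hα : 0 < α) (hβ : 0 < β) (ht : 0 < t) :
    IntervalIntegrable (fun s => (t - s) ^ (α - 1) * s ^ (β - 1)) volume 0 t := by
  refine intervalIntegral.intervalIntegrable_of_integral_ne_zero ?_
  rw [integral_sub_rpow_mul_rpow hα hβ ht]
  positivity

lemma continuous_mittagLeffler_mul_rpow (hρ : 0 < ρ) (μ c : ℝ) :
    Continuous fun s : ℝ => mittagLeffler ρ μ (c * s ^ ρ) :=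
  (continuous_mittagLeffler hρ μ).comp ((Real.continuous_rpow_const hρ.le).const_mul c)

lemma intervalIntegrable_sub_rpow_mul_mittagLeffler (hρ : 0 < ρ) (hα : 0 < α) (hμ : 0 < μ)
    (ht : 0 < t) (c : ℝ) :
    IntervalIntegrable
      (fun s => (t - s) ^ (α - 1) * (s ^ (μ - 1) * mittagLeffler ρ μ (c * s ^ ρ))) volume 0 t := by
  simp only [← mul_assoc]
  exact (intervalIntegrable_sub_rpow_mul_rpow hα hμ ht).mul_continuousOn
    (continuous_mittagLeffler_mul_rpow hρ μ c).continuousOn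

lemma integral_sub_rpow_mul_mittagLeffler_term (hρ : 0 < ρ) (hα : 0 < α) (hμ : 0 < μ)
    (ht : 0 < t) (c : ℝ) (k : ℕ) :
    ∫ s in (0 : ℝ)..t,
        (t - s) ^ (α - 1) * s ^ (μ - 1) * ((c * s ^ ρ) ^ k / Real.Gamma (ρ * k + μ)) =
      Real.Gamma α * t ^ (μ + α - 1) * ((c * t ^ ρ) ^ k / Real.Gamma (ρ * k + (μ + α))) := by
  have hpos : 0 < ρ * k + μ := by positivity
  calc _ = ∫ s in (0 : ℝ)..t, c ^ k / Real.Gamma (ρ * k + μ) *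
          ((t - s) ^ (α - 1) * s ^ (ρ * k + μ - 1)) := by
        refine intervalIntegral.integral_congr_Ioo_of_le ht.le fun s hs => ?_
        rw [add_sub_assoc, Real.rpow_add hs.1, Real.rpow_mul_natCast hs.1.le]
        ring
    _ = _ := by
        rw [intervalIntegral.integral_const_mul, integral_sub_rpow_mul_rpow hα hpos ht,
          show ρ * k + μ + α - 1 = ρ * k + (μ + α - 1) by ring, Real.rpow_add ht,
          Real.rpow_mul_natCast ht.le, add_assoc]
        have := (Real.Gamma_pos_of_pos hpos).ne'
        field_simp
        ring

lemma integral_sub_rpow_mul_mittagLeffler (hρ : 0 < ρ) (hα : 0 < α) (hμ : 0 < μ)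
    (ht : 0 < t) (c : ℝ) :
    ∫ s in (0 : ℝ)..t, (t - s) ^ (α - 1) * (s ^ (μ - 1) * mittagLeffler ρ μ (c * s ^ ρ)) =
      Real.Gamma α * t ^ (μ + α - 1) * mittagLeffler ρ (μ + α) (c * t ^ ρ) := by
  set F : ℝ → ℕ → ℝ → ℝ := fun c k s =>
    (t - s) ^ (α - 1) * s ^ (μ - 1) * ((c * s ^ ρ) ^ k / Real.Gamma (ρ * k + μ)) with hF
  have hF_sum : ∀ c s, HasSum (F c · s)
      ((t - s) ^ (α - 1) * (s ^ (μ - 1) * mittagLeffler ρ μ (c * s ^ ρ))) := fun c s => by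
    rw [← mul_assoc]
    exact (hasSum_mittagLeffler hρ μ (c * s ^ ρ)).mul_left _
  have hF_norm : ∀ k, ∀ s ∈ uIoc 0 t, ‖F c k s‖ ≤ F |c| k s := fun k s hs => by
    rw [uIoc_of_le ht.le] at hs
    have hs_pos := hs.1
    have hts := sub_nonneg.2 hs.2
    have hGamma := Real.Gamma_pos_of_pos (show 0 < ρ * k + μ by positivity)
    simp only [hF, norm_mul, norm_div, norm_pow, Real.norm_eq_abs]
    rw [abs_of_nonneg (Real.rpow_nonneg hts _), abs_of_nonneg (Real.rpow_nonneg hs_pos.le _),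
      abs_of_nonneg (Real.rpow_nonneg hs_pos.le _), abs_of_pos hGamma]
  have hbound_int : IntervalIntegrable (fun s => ∑' k, F |c| k s) volume 0 t := by
    simpa only [(hF_sum |c| _).tsum_eq] using
      intervalIntegrable_sub_rpow_mul_mittagLeffler hρ hα hμ ht |c|
  have hsum := intervalIntegral.hasSum_integral_of_dominated_convergence (F |c|)
    (fun k => by fun_prop)
    (fun k => .of_forall (hF_norm k))
    (.of_forall fun s _ => (hF_sum |c| s).summable) hbound_int
    (.of_forall fun s _ => hF_sum c s)
  simp only [hF, integral_sub_rpow_mul_mittagLeffler_term hρ hα hμ ht] at hsum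
  exact hsum.unique ((hasSum_mittagLeffler hρ (μ + α) (c * t ^ ρ)).mul_left _)

lemma mittagLeffler_zero_right (ρ μ : ℝ) : mittagLeffler ρ μ 0 = 1 / Real.Gamma μ := by
  rw [mittagLeffler, tsum_eq_single 0 fun k hk => by simp [hk]]
  simp

lemma rpow_mul_mittagLeffler_eq_add_integral (hρ : 0 < ρ) (hμ : 0 < μ) (ht : 0 < t) (c : ℝ) :
    t ^ (μ - 1) * mittagLeffler ρ μ (c * t ^ ρ) =
      t ^ (μ - 1) * (1 / Real.Gamma μ) + c / Real.Gamma ρ *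
        ∫ s in (0 : ℝ)..t, (t - s) ^ (ρ - 1) * (s ^ (μ - 1) * mittagLeffler ρ μ (c * s ^ ρ)) := by
  have hGamma := (Real.Gamma_pos_of_pos hρ).ne'
  rw [integral_sub_rpow_mul_mittagLeffler hρ hρ hμ ht, mittagLeffler_eq_add_mul hρ,
    add_sub_right_comm, Real.rpow_add ht]
  field_simp

lemma mittagLeffler_neg_pos (hρ : 0 < ρ) (hρ1 : ρ ≤ 1) (hμ : ρ ≤ μ) {x : ℝ} (hx : 0 ≤ x) :
    0 < mittagLeffler ρ μ (-x) := by
  have hμ_pos : 0 < μ := hρ.trans_le hμ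
  have hcont := continuous_mittagLeffler_mul_rpow hρ μ (-x)
  suffices h : 0 < (1 : ℝ) ^ (μ - 1) * mittagLeffler ρ μ (-x * 1 ^ ρ) by simpa using h
  refine volterra_pos (w := fun t => t ^ (μ - 1) * mittagLeffler ρ μ (-x * t ^ ρ))
    (φ := fun t => t ^ (μ - 1) * (1 / Real.Gamma μ)) (g := x / Real.Gamma ρ)
    hρ hρ1 (by positivity) ?_ ?_ ?_ ?_ ?_ one_pos
  · have hmono : MonotoneOn (fun t : ℝ => t ^ (μ - ρ) * (1 / Real.Gamma μ)) (Ioi 0) :=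
      fun a ha b _ hab => mul_le_mul_of_nonneg_right
        (Real.rpow_le_rpow ha.le hab (sub_nonneg.2 hμ)) (by positivity)
    refine hmono.congr fun t ht => ?_
    rw [← mul_assoc, ← Real.rpow_add ht, sub_add_sub_comm, add_comm, add_sub_add_right_eq_sub]
  · exact (continuousOn_id.rpow_const fun t ht => Or.inl ht.ne').mul hcont.continuousOn
  · have hzero : 0 < mittagLeffler ρ μ (-x * 0 ^ ρ) := by
      rw [Real.zero_rpow hρ.ne', mul_zero, mittagLeffler_zero_right]
      positivity
    filter_upwards [self_mem_nhdsWithin,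
      nhdsWithin_le_nhds (hcont.continuousAt.eventually_const_lt hzero)] with t ht hEt
    exact mul_pos (Real.rpow_pos_of_pos ht _) hEt
  · exact fun t ht => intervalIntegrable_sub_rpow_mul_mittagLeffler hρ hρ hμ_pos ht (-x)
  · intro t ht
    rw [rpow_mul_mittagLeffler_eq_add_integral hρ hμ_pos ht (-x), neg_div, neg_mul,
      ← sub_eq_add_neg]

lemma rpow_mul_mittagLeffler_eq_integral (hρ : 0 < ρ) (ht : 0 < t) (c : ℝ) :
    t ^ ρ * mittagLeffler ρ (ρ + 1) (c * t ^ ρ) =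
      ∫ s in (0 : ℝ)..t, s ^ (ρ - 1) * mittagLeffler ρ ρ (c * s ^ ρ) := by
  simpa using (integral_sub_rpow_mul_mittagLeffler hρ one_pos hρ ht c).symm

lemma monotoneOn_rpow_mul_mittagLeffler_neg (hρ : 0 < ρ) (hρ1 : ρ ≤ 1) {x : ℝ} (hx : 0 ≤ x) :
    MonotoneOn (fun t => t ^ ρ * mittagLeffler ρ (ρ + 1) (-x * t ^ ρ)) (Ioi 0) := by
  intro a ha b hb hab
  simp only [rpow_mul_mittagLeffler_eq_integral hρ ha, rpow_mul_mittagLeffler_eq_integral hρ hb]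
  refine intervalIntegral.integral_mono_interval le_rfl ha.le hab ?_ ?_
  · refine ae_restrict_of_forall_mem measurableSet_Ioc fun s hs => ?_
    have hs_pos : 0 < s := hs.1
    have hE := mittagLeffler_neg_pos hρ hρ1 le_rfl (x := x * s ^ ρ) (by positivity)
    rw [← neg_mul] at hE
    exact (mul_pos (Real.rpow_pos_of_pos hs_pos _) hE).le
  · simpa using intervalIntegrable_sub_rpow_mul_mittagLeffler hρ one_pos hρ hb (-x)

lemma mittagLeffler_one_neg_le (hρ : 0 < ρ) (hρ1 : ρ ≤ 1) {x : ℝ} (hx : 0 ≤ x)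
    (ht : 0 < t) (ht1 : t ≤ 1) :
    mittagLeffler ρ 1 (-x) ≤ mittagLeffler ρ 1 (-x * t ^ ρ) := by
  have hmono := mul_le_mul_of_nonneg_left
    (monotoneOn_rpow_mul_mittagLeffler_neg hρ hρ1 hx ht (mem_Ioi.2 one_pos) ht1) hx
  simp only [Real.one_rpow, one_mul, mul_one] at hmono
  rw [mittagLeffler_eq_add_mul hρ 1, mittagLeffler_eq_add_mul hρ 1, add_comm 1 ρ]
  linarith

lemma mittagLeffler_one_neg_le_Gamma_mul (hρ : 0 < ρ) (hρ1 : ρ ≤ 1) {x : ℝ} (hx : 0 ≤ x) :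
    mittagLeffler ρ 1 (-x) ≤ Real.Gamma (ρ + 1) * mittagLeffler ρ (ρ + 1) (-x) := by
  have hfrac : ∫ s in (0 : ℝ)..1, (1 - s) ^ (ρ - 1) * mittagLeffler ρ 1 (-x * s ^ ρ) =
      Real.Gamma ρ * mittagLeffler ρ (ρ + 1) (-x) := by
    simpa [add_comm] using integral_sub_rpow_mul_mittagLeffler hρ hρ one_pos one_pos (-x)
  have hle : ∫ s in (0 : ℝ)..1, (1 - s) ^ (ρ - 1) * mittagLeffler ρ 1 (-x) ≤
      ∫ s in (0 : ℝ)..1, (1 - s) ^ (ρ - 1) * mittagLeffler ρ 1 (-x * s ^ ρ) := by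
    refine intervalIntegral.integral_mono_on_of_le_Ioo zero_le_one
      ((intervalIntegrable_sub_rpow hρ 1 0 1).mul_const _)
      ((intervalIntegrable_sub_rpow hρ 1 0 1).mul_continuousOn
        (continuous_mittagLeffler_mul_rpow hρ 1 (-x)).continuousOn) fun s hs => ?_
    exact mul_le_mul_of_nonneg_left (mittagLeffler_one_neg_le hρ hρ1 hx hs.1 hs.2.le)
      (Real.rpow_nonneg (sub_nonneg.2 hs.2.le) _)
  rw [hfrac, intervalIntegral.integral_mul_const, integral_sub_rpow hρ, sub_zero, Real.one_rpow,
    one_div_mul_eq_div, div_le_iff₀' hρ] at hle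
  rwa [Real.Gamma_add_one hρ.ne', mul_assoc]

lemma inv_mittagLeffler_add_one_neg_le (hρ : 0 < ρ) (hρ1 : ρ ≤ 1) {x : ℝ} (hx : 0 ≤ x) :
    (mittagLeffler ρ (ρ + 1) (-x))⁻¹ ≤ Real.Gamma (ρ + 1) + x := by
  have hle := mittagLeffler_one_neg_le_Gamma_mul hρ hρ1 hx
  rw [mittagLeffler_eq_add_mul hρ 1, add_comm 1 ρ, Real.Gamma_one] at hle
  rw [inv_le_iff_one_le_mul₀ (mittagLeffler_neg_pos hρ hρ1 (by linarith) hx)]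
  linarith

variable {T : ℝ}

lemma inv_rpow_mul_mittagLeffler_le (hρ : 0 < ρ) (hρ1 : ρ ≤ 1) (hT : 0 < T) {x : ℝ}
    (hx : 0 ≤ x) :
    (T ^ ρ * mittagLeffler ρ (ρ + 1) (-x * T ^ ρ))⁻¹ ≤
      (Real.Gamma (ρ + 1) / T ^ ρ + 1) * (x + 1) := by
  calc (T ^ ρ * mittagLeffler ρ (ρ + 1) (-x * T ^ ρ))⁻¹
      ≤ (T ^ ρ)⁻¹ * (Real.Gamma (ρ + 1) + x * T ^ ρ) := by
        rw [mul_inv, neg_mul]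
        gcongr
        exact inv_mittagLeffler_add_one_neg_le hρ hρ1 (by positivity)
    _ = Real.Gamma (ρ + 1) / T ^ ρ + x := by field_simp
    _ ≤ (Real.Gamma (ρ + 1) / T ^ ρ + 1) * (x + 1) := by
        have : 0 ≤ Real.Gamma (ρ + 1) / T ^ ρ * x := by positivity
        linarith

lemma norm_div_rpow_mul_mittagLeffler_le (hρ : 0 < ρ) (hρ1 : ρ ≤ 1) (hT : 0 < T) {x : ℝ}
    (hx : 0 ≤ x) (z : ℂ) :
    ‖z / ((T ^ ρ * mittagLeffler ρ (ρ + 1) (-x * T ^ ρ) : ℝ) : ℂ)‖ ≤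
      (Real.Gamma (ρ + 1) / T ^ ρ + 1) * ((x + 1) * ‖z‖) := by
  have hE : 0 < mittagLeffler ρ (ρ + 1) (-x * T ^ ρ) := by
    rw [neg_mul]
    exact mittagLeffler_neg_pos hρ hρ1 (by linarith) (by positivity)
  rw [norm_div, Complex.norm_real, Real.norm_of_nonneg (by positivity), div_eq_inv_mul, ← mul_assoc]
  gcongr
  exact inv_rpow_mul_mittagLeffler_le hρ hρ1 hT hx

end MittagLeffler

section LatticeSums

lemma summable_norm_sum_zsmul_rpow {ι E : Type*} [Fintype ι] [NormedAddCommGroup E]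
    [NormedSpace ℝ E] (b : Module.Basis ι ℝ E) {r : ℝ} (hr : r < -Fintype.card ι) :
    Summable fun n : ι → ℤ => ‖∑ i, n i • b i‖ ^ r := by
  have := b.finiteDimensional_of_finite
  have hrank : r < -Module.finrank ℤ (Submodule.span ℤ (Set.range b)) := by
    rwa [Module.finrank_eq_card_basis (b.restrictScalars ℤ)]
  refine ((ZLattice.summable_norm_rpow _ r hrank).comp_injective
    (b.restrictScalars ℤ).equivFun.symm.injective).congr fun n => ?_
  simp [Module.Basis.equivFun_symm_apply, Submodule.coe_norm]

lemma summable_sqrt_sum_sq_rpow {ι : Type*} [Fintype ι] {r : ℝ} (hr : r < -Fintype.card ι) :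
    Summable fun n : ι → ℤ => √(∑ i, (n i : ℝ) ^ 2) ^ r := by
  classical
  refine (summable_norm_sum_zsmul_rpow (EuclideanSpace.basisFun ι ℝ).toBasis hr).congr fun n => ?_
  simp [EuclideanSpace.norm_eq, Pi.single_apply]

lemma summable_add_one_rpow_of_le {ι : Type*} [Fintype ι] {A : (ι → ℤ) → ℝ} {c m τ : ℝ}
    (hm : 0 < m) (hc : 0 < c) (hA : ∀ n, c * √(∑ i, (n i : ℝ) ^ 2) ^ m ≤ A n)
    (hτ : Fintype.card ι / (2 * m) < τ) :
    Summable fun n => (A n + 1) ^ (-(2 * τ)) := by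
  have hτ_pos : 0 < τ := lt_of_le_of_lt (by positivity) hτ
  have hr : m * (-(2 * τ)) < -Fintype.card ι := by
    rw [div_lt_iff₀ (by positivity)] at hτ
    linarith
  refine .of_norm_bounded_eventually ((summable_sqrt_sum_sq_rpow hr).mul_left (c ^ (-(2 * τ)))) ?_
  filter_upwards [eventually_cofinite_ne 0] with n hn
  have hn_pos : 0 < √(∑ i, (n i : ℝ) ^ 2) := by
    obtain ⟨i, hi⟩ := Function.ne_iff.1 hn
    exact Real.sqrt_pos.2 (Finset.sum_pos' (fun i _ => sq_nonneg _)
      ⟨i, Finset.mem_univ i, sq_pos_of_ne_zero (by simpa using hi)⟩)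
  have hcn_pos : 0 < c * √(∑ i, (n i : ℝ) ^ 2) ^ m := by positivity
  have hAn : c * √(∑ i, (n i : ℝ) ^ 2) ^ m ≤ A n + 1 := (hA n).trans (by linarith)
  rw [Real.norm_of_nonneg (Real.rpow_nonneg (hcn_pos.le.trans hAn) _), Real.rpow_mul hn_pos.le,
    ← Real.mul_rpow hc.le (by positivity)]
  exact Real.rpow_le_rpow_of_nonpos hcn_pos hAn (by linarith)

end LatticeSums

section WeightedCauchySchwarz

variable {ι : Type*}

lemma summable_mul_and_sq_tsum_mul_le {f g : ι → ℝ} (hf : ∀ i, 0 ≤ f i) (hg : ∀ i, 0 ≤ g i)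
    (hf_sum : Summable fun i => f i ^ 2) (hg_sum : Summable fun i => g i ^ 2) :
    (Summable fun i => f i * g i) ∧
      (∑' i, f i * g i) ^ 2 ≤ (∑' i, f i ^ 2) * ∑' i, g i ^ 2 := by
  simp only [← Real.rpow_two] at hf_sum hg_sum
  obtain ⟨hsum, hle⟩ := Real.summable_and_inner_le_Lp_mul_Lq_tsum_of_nonneg
    Real.HolderConjugate.two_two hf hg hf_sum hg_sum
  simp only [Real.rpow_two, ← Real.sqrt_eq_rpow] at hle
  have hnonneg : 0 ≤ ∑' i, f i * g i := tsum_nonneg fun i => mul_nonneg (hf i) (hg i)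
  refine ⟨hsum, ?_⟩
  calc (∑' i, f i * g i) ^ 2 ≤ (√(∑' i, f i ^ 2) * √(∑' i, g i ^ 2)) ^ 2 := by gcongr
    _ = (∑' i, f i ^ 2) * ∑' i, g i ^ 2 := by
        rw [mul_pow, Real.sq_sqrt (tsum_nonneg fun i => sq_nonneg _),
          Real.sq_sqrt (tsum_nonneg fun i => sq_nonneg _)]

lemma summable_mul_norm_and_sq_tsum_le {E : Type*} [SeminormedAddCommGroup E] {B : ι → ℝ}
    (hB : ∀ i, 0 < B i) {τ : ℝ} (hBτ : Summable fun i => B i ^ (-(2 * τ))) {Ψ : ι → E}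
    (hΨ : Summable fun i => B i ^ (2 * (τ + 1)) * ‖Ψ i‖ ^ 2) :
    (Summable fun i => B i * ‖Ψ i‖) ∧
      (∑' i, B i * ‖Ψ i‖) ^ 2 ≤
        (∑' i, B i ^ (-(2 * τ))) * ∑' i, B i ^ (2 * (τ + 1)) * ‖Ψ i‖ ^ 2 := by
  have hf : ∀ i, (B i ^ (-τ)) ^ 2 = B i ^ (-(2 * τ)) := fun i => by
    rw [← Real.rpow_mul_natCast (hB i).le]
    ring_nf
  have hg : ∀ i, (B i ^ (τ + 1) * ‖Ψ i‖) ^ 2 = B i ^ (2 * (τ + 1)) * ‖Ψ i‖ ^ 2 := fun i => by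
    rw [mul_pow, ← Real.rpow_mul_natCast (hB i).le, Nat.cast_two, mul_comm (τ + 1)]
  have hfg : ∀ i, B i ^ (-τ) * (B i ^ (τ + 1) * ‖Ψ i‖) = B i * ‖Ψ i‖ := fun i => by
    rw [← mul_assoc, ← Real.rpow_add (hB i), neg_add_cancel_left, Real.rpow_one]
  simpa only [hf, hg, hfg] using summable_mul_and_sq_tsum_mul_le
    (f := fun i => B i ^ (-τ)) (g := fun i => B i ^ (τ + 1) * ‖Ψ i‖)
    (fun i => Real.rpow_nonneg (hB i).le _)
    (fun i => mul_nonneg (Real.rpow_nonneg (hB i).le _) (norm_nonneg _))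
    (by simpa only [hf] using hBτ) (by simpa only [hg] using hΨ)

end WeightedCauchySchwarz

section TrigonometricSeries

variable {N : ℕ}

lemma norm_charFun (n : Fin N → ℤ) (x : Fin N → ℝ) : ‖charFun n x‖ = 1 := by
  rw [charFun, mul_comm]
  exact_mod_cast Complex.norm_exp_ofReal_mul_I (∑ i, (n i : ℝ) * x i)

lemma continuous_charFun (n : Fin N → ℤ) : Continuous (charFun n) := by
  unfold charFun
  fun_prop

/-- The trigonometric series `Σ aₙ e^{in·x}` on the `N`-dimensional torus. The value is
meaningful for absolutely summable coefficients; otherwise `tsum` may return `0`. -/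
noncomputable def trigSeries (a : (Fin N → ℤ) → ℂ) (x : Fin N → ℝ) : ℂ :=
  ∑' n, a n * charFun n x

variable {a : (Fin N → ℤ) → ℂ}

lemma norm_mul_charFun (z : ℂ) (n : Fin N → ℤ) (x : Fin N → ℝ) : ‖z * charFun n x‖ = ‖z‖ := by
  rw [norm_mul, norm_charFun, mul_one]

lemma continuous_trigSeries (ha : Summable fun n => ‖a n‖) : Continuous (trigSeries a) :=
  continuous_tsum (fun n => (continuous_charFun n).const_mul (a n)) ha
    fun n x => (norm_mul_charFun (a n) n x).le

lemma tendstoUniformly_trigSeries (ha : Summable fun n => ‖a n‖) :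
    TendstoUniformly (fun (s : Finset (Fin N → ℤ)) x => ∑ n ∈ s, a n * charFun n x)
      (trigSeries a) atTop :=
  tendstoUniformly_tsum ha fun n x => (norm_mul_charFun (a n) n x).le

lemma hasSum_trigSeries (ha : Summable fun n => ‖a n‖) (x : Fin N → ℝ) :
    HasSum (fun n => a n * charFun n x) (trigSeries a x) :=
  (Summable.of_norm (by simpa only [norm_mul_charFun] using ha)).hasSum

lemma norm_trigSeries_le (ha : Summable fun n => ‖a n‖) (x : Fin N → ℝ) :
    ‖trigSeries a x‖ ≤ ∑' n, ‖a n‖ :=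
  tsum_of_norm_bounded ha.hasSum fun n => (norm_mul_charFun (a n) n x).le

end TrigonometricSeries

theorem stmt12_general {N : ℕ} {ρ T : ℝ} (hρ : 0 < ρ) (hρ1 : ρ ≤ 1) (hT : 0 < T)
    {A : (Fin N → ℤ) → ℝ} (hA0 : ∀ n, 0 ≤ A n) {τ : ℝ}
    (hAτ : Summable fun n => (A n + 1) ^ (-(2 * τ))) :
    ∃ C : ℝ, 0 < C ∧ ∀ Ψ : (Fin N → ℤ) → ℂ,
      Summable (fun n => (A n + 1) ^ (2 * (τ + 1)) * ‖Ψ n‖ ^ 2) →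
      (Summable fun n => ‖Ψ n / ((T ^ ρ * mittagLeffler ρ (ρ + 1) (-A n * T ^ ρ) : ℝ) : ℂ)‖) ∧
      ∃ f₁ : (Fin N → ℝ) → ℂ, Continuous f₁ ∧
        TendstoUniformly
          (fun (s : Finset (Fin N → ℤ)) (x : Fin N → ℝ) =>
            ∑ n ∈ s, Ψ n / ((T ^ ρ * mittagLeffler ρ (ρ + 1) (-A n * T ^ ρ) : ℝ) : ℂ)
              * charFun n x)
          f₁ atTop ∧
        (∀ x, HasSum
          (fun n => Ψ n / ((T ^ ρ * mittagLeffler ρ (ρ + 1) (-A n * T ^ ρ) : ℝ) : ℂ)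
            * charFun n x) (f₁ x)) ∧
        ∀ x, ‖f₁ x‖ ^ 2 ≤ C * ∑' n, (A n + 1) ^ (2 * (τ + 1)) * ‖Ψ n‖ ^ 2 := by
  set K := Real.Gamma (ρ + 1) / T ^ ρ + 1
  have hK : 0 < K := by positivity
  have hB : ∀ n, 0 < A n + 1 := fun n => by linarith [hA0 n]
  have hSpos : 0 < ∑' n, (A n + 1) ^ (-(2 * τ)) :=
    hAτ.tsum_pos (fun n => (Real.rpow_pos_of_pos (hB n) _).le) 0 (Real.rpow_pos_of_pos (hB 0) _)
  refine ⟨K ^ 2 * ∑' n, (A n + 1) ^ (-(2 * τ)), mul_pos (pow_pos hK 2) hSpos, fun Ψ hΨ => ?_⟩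
  obtain ⟨hsum, hcs⟩ := summable_mul_norm_and_sq_tsum_le hB hAτ hΨ
  have hcoeff := fun n => norm_div_rpow_mul_mittagLeffler_le hρ hρ1 hT (hA0 n) (Ψ n)
  have ha := Summable.of_nonneg_of_le (fun _ => norm_nonneg _) hcoeff (hsum.mul_left K)
  refine ⟨ha, trigSeries _, continuous_trigSeries ha, tendstoUniformly_trigSeries ha,
    hasSum_trigSeries ha, fun x => ?_⟩
  calc ‖trigSeries _ x‖ ^ 2 ≤ (K * ∑' n, (A n + 1) * ‖Ψ n‖) ^ 2 := by
        gcongr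
        rw [← tsum_mul_left]
        exact (norm_trigSeries_le ha x).trans (ha.tsum_le_tsum hcoeff (hsum.mul_left K))
    _ ≤ K ^ 2 * (∑' n, (A n + 1) ^ (-(2 * τ))) *
          ∑' n, (A n + 1) ^ (2 * (τ + 1)) * ‖Ψ n‖ ^ 2 := by
        rw [mul_pow, mul_assoc]
        gcongr

/-- for `ρ ∈ (0,1]`, `T > 0`, `τ > N/(2m)`, and `Ψ` with
`Σ (A(n)+1)^{2(τ+1)}|Ψ_n|² < ∞`, the series
`f¹(x) = Σ Ψ_n / (T^ρ E_{ρ,ρ+1}(−A(n)T^ρ)) e^{inx}` converges absolutely and uniformly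
on `𝕋^N` and `‖f¹‖²_{C(𝕋^N)} ≤ C Σ (A(n)+1)^{2(τ+1)}|Ψ_n|²`. -/
theorem stmt12 (N m : ℕ) (hN : 0 < N) (hm : 0 < m) (ρ T : ℝ)
    (hρ : 0 < ρ) (hρ1 : ρ ≤ 1) (hT : 0 < T)
    (c₁ c₂ : ℝ) (hc₁ : 0 < c₁) (hc₂ : 0 < c₂)
    (A : (Fin N → ℤ) → ℝ) (hA0 : ∀ n, 0 ≤ A n)
    (hA : ∀ n, c₁ * Real.sqrt (∑ i, ((n i : ℝ)) ^ 2) ^ (m : ℕ) ≤ A n ∧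
               A n ≤ c₂ * Real.sqrt (∑ i, ((n i : ℝ)) ^ 2) ^ (m : ℕ))
    (τ : ℝ) (hτ : (N : ℝ) / (2 * m) < τ) :
    ∃ C : ℝ, 0 < C ∧ ∀ Ψ : (Fin N → ℤ) → ℂ,
      Summable (fun n => (A n + 1) ^ (2 * (τ + 1)) * ‖Ψ n‖ ^ 2) →
      (Summable fun n => ‖Ψ n / ((T ^ ρ * mittagLeffler ρ (ρ + 1) (-A n * T ^ ρ) : ℝ) : ℂ)‖) ∧
      ∃ f₁ : (Fin N → ℝ) → ℂ, Continuous f₁ ∧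
        TendstoUniformly
          (fun (s : Finset (Fin N → ℤ)) (x : Fin N → ℝ) =>
            ∑ n ∈ s, Ψ n / ((T ^ ρ * mittagLeffler ρ (ρ + 1) (-A n * T ^ ρ) : ℝ) : ℂ)
              * charFun n x)
          f₁ atTop ∧
        (∀ x, HasSum
          (fun n => Ψ n / ((T ^ ρ * mittagLeffler ρ (ρ + 1) (-A n * T ^ ρ) : ℝ) : ℂ)
            * charFun n x) (f₁ x)) ∧
        ∀ x, ‖f₁ x‖ ^ 2 ≤ C * ∑' n, (A n + 1) ^ (2 * (τ + 1)) * ‖Ψ n‖ ^ 2 :=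
  stmt12_general hρ hρ1 hT hA0 <| summable_add_one_rpow_of_le (Nat.cast_pos.2 hm) hc₁
    (fun n => by simpa only [Real.rpow_natCast] using (hA n).1) (by simpa using hτ)
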